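/- arXiv:2107.13831 — 2 statements merged into one kernel-verified Lean document; each statement's English description precedes it below -/
import Mathlib

section
/- There exists a simple graph on 10^7 vertices that contains neither a 51-clique nor a 51-anticlique. Formally: there is a simple graph G on Fin 10000000 such that G is 51-clique-free and the complement of G is 51-clique-free. -/
/-!
Erdős's counting argument: colour the edges of a complete graph with `q` colours. The colourings
that give `m` prescribed edges one and the same given colour are a fraction `q ^ (-m)` of all
colourings, so those that make some `k`-subset of `N` vertices monochromatic are at most a fraction
`N.choose k * q / q ^ (k.choose 2)`. If this is less than `1`, some colouring has no monochromatic
`k`-subset. For `q = 2`, `N = 10 ^ 7` and `k = 51`, the crude bounds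
`N.choose k ≤ N ^ k` and `N ≤ 2 ^ 24` suffice.
-/

open Finset Fintype SimpleGraph

section Coloring

variable {E K : Type*} [Fintype K]

lemma card_filter_forall_mem_eq [Fintype E] [DecidableEq E] [DecidableEq K] (A : Finset E) (c : K) :
    #{f : E → K | ∀ e ∈ A, f e = c} = card K ^ #Aᶜ := by
  have eq_piFinset : ({f : E → K | ∀ e ∈ A, f e = c} : Finset (E → K)) =
      piFinset fun e ↦ if e ∈ A then {c} else univ := by
    ext f
    simp only [mem_filter_univ, mem_piFinset]
    refine forall_congr' fun e ↦ ?_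
    split_ifs with he <;> simp [he]
  simp [eq_piFinset, apply_ite card, prod_ite, filter_notMem_eq_sdiff, compl_eq_univ_sdiff]

lemma card_filter_forall_mem_eq_mul_pow_le [Fintype E] [DecidableEq E] [DecidableEq K]
    [Nonempty K] {A : Finset E} {m : ℕ} (hA : m ≤ #A) (c : K) :
    #{f : E → K | ∀ e ∈ A, f e = c} * card K ^ m ≤ card K ^ card E := by
  calc #{f : E → K | ∀ e ∈ A, f e = c} * card K ^ m
      ≤ card K ^ #Aᶜ * card K ^ #A := by
        rw [card_filter_forall_mem_eq]
        gcongr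
        exact card_pos
    _ = card K ^ card E := by rw [← pow_add, card_compl_add_card]

theorem exists_forall_mem_exists_ne_of_card_mul_lt [Finite E] [Nonempty K] {H : Finset (Finset E)}
    {m : ℕ} (hH : ∀ A ∈ H, m ≤ #A) (hlt : #H * card K < card K ^ m) :
    ∃ f : E → K, ∀ A ∈ H, ∀ c, ∃ e ∈ A, f e ≠ c := by
  classical
  cases nonempty_fintype E
  let bad : Finset (E → K) := (H ×ˢ univ).biUnion fun p ↦ {f | ∀ e ∈ p.1, f e = p.2}
  have card_bad_mul_le : #bad * card K ^ m ≤ #H * card K * card K ^ card E := by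
    calc #bad * card K ^ m
        ≤ ∑ p ∈ H ×ˢ univ, #{f : E → K | ∀ e ∈ p.1, f e = p.2} * card K ^ m := by
          rw [← sum_mul]
          gcongr
          exact card_biUnion_le
      _ ≤ ∑ _ ∈ H ×ˢ (univ : Finset K), card K ^ card E :=
          sum_le_sum fun p hp ↦
            card_filter_forall_mem_eq_mul_pow_le (hH p.1 (mem_product.1 hp).1) p.2
      _ = #H * card K * card K ^ card E := by simp
  have card_bad_lt : #bad < #(univ : Finset (E → K)) := by
    rw [card_univ, card_fun]
    refine lt_of_mul_lt_mul_right (card_bad_mul_le.trans_lt ?_) (Nat.zero_le (card K ^ m))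
    rw [mul_comm (card K ^ card E)]
    gcongr
  obtain ⟨f, -, hf⟩ := exists_mem_notMem_of_card_lt_card card_bad_lt
  exact ⟨f, by simpa [bad] using hf⟩

end Coloring

section Graph

variable {V : Type*} [Fintype V] {k : ℕ}

theorem exists_topEdgeLabeling_forall_cliqueFree {K : Type*} [Fintype K] [Nonempty K]
    (h : (card V).choose k * card K < card K ^ k.choose 2) :
    ∃ C : TopEdgeLabeling V K, ∀ c, (C.labelGraph c).CliqueFree k := by
  classical
  let edges (s : Finset V) : Finset (Sym2 V) := s.offDiag.image Sym2.mk.uncurry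
  have choose_two_le_card : ∀ A ∈ (powersetCard k univ).image edges, k.choose 2 ≤ #A := by
    simp +contextual [edges, Sym2.card_image_offDiag]
  have card_edges_le : #((powersetCard k univ).image edges) ≤ (card V).choose k :=
    card_image_le.trans_eq (by simp)
  obtain ⟨f, hf⟩ := exists_forall_mem_exists_ne_of_card_mul_lt choose_two_le_card
    (lt_of_le_of_lt (by gcongr) h)
  refine ⟨fun e ↦ f e, fun c s hs ↦ ?_⟩
  obtain ⟨e, he, hne⟩ := hf (edges s) (mem_image_of_mem _ (by simpa using hs.card_eq)) c
  obtain ⟨⟨x, y⟩, hxy, rfl⟩ := mem_image.1 he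
  obtain ⟨hx, hy, x_ne_y⟩ := mem_offDiag.1 hxy
  obtain ⟨_, heq⟩ := (TopEdgeLabeling.labelGraph_adj x y).1 (hs.isClique hx hy x_ne_y)
  exact hne heq

theorem exists_cliqueFree_and_compl_cliqueFree (h : (card V).choose k * 2 < 2 ^ k.choose 2) :
    ∃ G : SimpleGraph V, G.CliqueFree k ∧ Gᶜ.CliqueFree k := by
  classical
  obtain ⟨C, hC⟩ := exists_topEdgeLabeling_forall_cliqueFree (K := Fin 2) (by simpa using h)
  refine ⟨C.labelGraph 1, hC 1, ?_⟩
  rw [← toTopEdgeLabeling_labelGraph_compl, C.labelGraph_toTopEdgeLabeling]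
  exact hC 0

end Graph

theorem exists_graph_no_51_clique_or_anticlique :
    ∃ G : SimpleGraph (Fin 10000000),
      G.CliqueFree 51 ∧ Gᶜ.CliqueFree 51 := by
  apply exists_cliqueFree_and_compl_cliqueFree
  have exponent_lt : 24 * 51 + 1 < Nat.choose 51 2 := by simp [Nat.choose_two_right]
  calc (card (Fin 10000000)).choose 51 * 2
      ≤ 10000000 ^ 51 * 2 := by
        rw [Fintype.card_fin]
        gcongr
        exact Nat.choose_le_pow _ _
    _ ≤ (2 ^ 24) ^ 51 * 2 := by gcongr; norm_num
    _ = 2 ^ (24 * 51 + 1) := by rw [pow_succ _ (24 * 51), pow_mul]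
    _ < 2 ^ Nat.choose 51 2 := by gcongr; exact one_lt_two
end

section
/- The number of families H of 3-element subsets of Fin 1000 for which there exists a 10-element subset S of Fin 1000 such that either every 3-element subset of S belongs to H or no 3-element subset of S belongs to H, is strictly less than 2^C(1000,3), i.e. strictly less than the total number of such families. -/
/-!
Erdős's union bound. A set `T ⊆ U` is monochromatic under the two-colouring of `U` into `H`, `U \ H`
for at most `2 * 2 ^ (#U - #T)` of the sets `H ⊆ U`. Take for `U` the `r`-subsets of an `n`-set
`X` and for `T` those of a `k`-set `S ⊆ X`: then `#T = k.choose r`, and there are `n.choose k`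
choices of `S`, so if `2 * n.choose k < 2 ^ k.choose r`, the hypergraphs having a clique or an
anticlique of size `k` cannot exhaust all `2 ^ #U` hypergraphs.
-/

open Finset

section Monochromatic

variable {α : Type*}

/-- `T` is monochromatic under the two-colouring whose colour classes are `H` and its complement. -/
def IsMonochromatic (H T : Finset α) : Prop :=
  T ⊆ H ∨ Disjoint T H

variable [DecidableEq α]

instance IsMonochromatic.instDecidable (H T : Finset α) : Decidable (IsMonochromatic H T) :=
  inferInstanceAs (Decidable (_ ∨ _))

theorem filter_isMonochromatic_powerset (U T : Finset α) :
    {H ∈ U.powerset | IsMonochromatic H T} = Icc T U ∪ (U \ T).powerset := by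
  ext H
  simp only [mem_filter, mem_union, mem_Icc, mem_powerset, subset_sdiff, IsMonochromatic,
    disjoint_comm (a := T)]
  tauto

theorem card_filter_isMonochromatic_mul_le {U T : Finset α} (hTU : T ⊆ U) :
    #{H ∈ U.powerset | IsMonochromatic H T} * 2 ^ #T ≤ 2 * 2 ^ #U := by
  calc #{H ∈ U.powerset | IsMonochromatic H T} * 2 ^ #T
      ≤ (#(Icc T U) + #(U \ T).powerset) * 2 ^ #T := by
        rw [filter_isMonochromatic_powerset]
        gcongr
        exact card_union_le _ _
    _ = 2 * (2 ^ (#U - #T) * 2 ^ #T) := by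
        rw [card_Icc_finset hTU, card_powerset, card_sdiff_of_subset hTU]
        ring
    _ = 2 * 2 ^ #U := by rw [pow_sub_mul_pow 2 (card_le_card hTU)]

variable {ι : Type*} {I : Finset ι} {T : ι → Finset α} {U : Finset α} {m : ℕ}

theorem card_filter_exists_isMonochromatic_mul_le (hTU : ∀ i ∈ I, T i ⊆ U)
    (hm : ∀ i ∈ I, m ≤ #(T i)) :
    #{H ∈ U.powerset | ∃ i ∈ I, IsMonochromatic H (T i)} * 2 ^ m ≤ 2 * #I * 2 ^ #U := by
  have union_bound : #{H ∈ U.powerset | ∃ i ∈ I, IsMonochromatic H (T i)} ≤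
      ∑ i ∈ I, #{H ∈ U.powerset | IsMonochromatic H (T i)} := by
    refine (card_le_card fun H hH ↦ ?_).trans card_biUnion_le
    obtain ⟨hHU, i, hi, hHi⟩ := mem_filter.1 hH
    exact mem_biUnion.2 ⟨i, hi, mem_filter.2 ⟨hHU, hHi⟩⟩
  calc #{H ∈ U.powerset | ∃ i ∈ I, IsMonochromatic H (T i)} * 2 ^ m
      ≤ ∑ i ∈ I, #{H ∈ U.powerset | IsMonochromatic H (T i)} * 2 ^ m := by
        rw [← sum_mul]
        gcongr
    _ ≤ ∑ _i ∈ I, 2 * 2 ^ #U := by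
        refine sum_le_sum fun i hi ↦ le_trans ?_ (card_filter_isMonochromatic_mul_le (hTU i hi))
        gcongr
        exacts [one_le_two, hm i hi]
    _ = 2 * #I * 2 ^ #U := by
        rw [sum_const, smul_eq_mul]
        ring

theorem card_filter_exists_isMonochromatic_lt (hTU : ∀ i ∈ I, T i ⊆ U)
    (hm : ∀ i ∈ I, m ≤ #(T i)) (hI : 2 * #I < 2 ^ m) :
    #{H ∈ U.powerset | ∃ i ∈ I, IsMonochromatic H (T i)} < 2 ^ #U := by
  refine lt_of_mul_lt_mul_right (a := 2 ^ m) ?_ (Nat.zero_le _)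
  calc #{H ∈ U.powerset | ∃ i ∈ I, IsMonochromatic H (T i)} * 2 ^ m
      ≤ 2 * #I * 2 ^ #U := card_filter_exists_isMonochromatic_mul_le hTU hm
    _ < 2 ^ m * 2 ^ #U := by gcongr
    _ = 2 ^ #U * 2 ^ m := mul_comm _ _

end Monochromatic

theorem isMonochromatic_powersetCard_iff {X : Type*} {H : Finset (Finset X)} {S : Finset X}
    {r : ℕ} :
    IsMonochromatic H (powersetCard r S) ↔
      (∀ A ⊆ S, #A = r → A ∈ H) ∨ (∀ A ⊆ S, #A = r → A ∉ H) := by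
  simp only [IsMonochromatic, subset_iff (s₂ := H), disjoint_left, mem_powersetCard, and_imp]

theorem natCard_subtype_set {α : Type*} [Fintype α] (p : Set α → Prop)
    [DecidablePred fun s : Finset α ↦ p s] :
    Nat.card {s : Set α // p s} = #{s : Finset α | p s} := by
  classical
  rw [← Fintype.card_subtype, ← Nat.card_eq_fintype_card]
  exact Nat.card_congr (Fintype.finsetEquivSet.subtypeEquiv fun _ ↦ Iff.rfl).symm

theorem count_ramsey_hypergraphs_lt_general {X : Type*} [Fintype X] {r k : ℕ}
    (h : 2 * (Fintype.card X).choose k < 2 ^ k.choose r) :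
    Nat.card {H : Set (Finset X) // (∀ A ∈ H, A.card = r) ∧
        ∃ S : Finset X, S.card = k ∧
          ((∀ A ⊆ S, A.card = r → A ∈ H) ∨ (∀ A ⊆ S, A.card = r → A ∉ H))} <
      2 ^ (Fintype.card X).choose r := by
  classical
  let U : Finset (Finset X) := powersetCard r univ
  let I : Finset (Finset X) := powersetCard k univ
  have hcard : #{H ∈ U.powerset | ∃ S ∈ I, IsMonochromatic H (powersetCard r S)} < 2 ^ #U := by
    refine card_filter_exists_isMonochromatic_lt (m := k.choose r)
      (fun S _ ↦ powersetCard_mono S.subset_univ) (fun S hS ↦ ?_) ?_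
    · rw [card_powersetCard, mem_powersetCard_univ.1 hS]
    · rwa [card_powersetCard, card_univ]
  rw [natCard_subtype_set, ← card_univ, ← card_powersetCard]
  convert hcard using 2
  ext H
  simp only [mem_filter, mem_univ, true_and, mem_coe, mem_powerset, subset_iff, U, I,
    mem_powersetCard_univ, isMonochromatic_powersetCard_iff]

theorem count_ramsey_hypergraphs_lt :
    Nat.card {H : Set (Finset (Fin 1000)) // (∀ A ∈ H, A.card = 3) ∧
        ∃ S : Finset (Fin 1000), S.card = 10 ∧
          ((∀ A ⊆ S, A.card = 3 → A ∈ H) ∨ (∀ A ⊆ S, A.card = 3 → A ∉ H))} <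
      2 ^ Nat.choose 1000 3 := by
  simpa only [Fintype.card_fin] using
    count_ramsey_hypergraphs_lt_general (X := Fin 1000) (r := 3) (k := 10)
      (by norm_num [Nat.choose_eq_descFactorial_div_factorial])
end
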